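/- arXiv:1607.03292 — 4 statements merged into one kernel-verified Lean document; each statement's English description precedes it below -/
import Mathlib

section
/- For points p and q in the root square and d ∈ ℕ, the following are equivalent: (i) the routing sequences of p and q agree at every step i < d; (ii) q ∈ R_d(p); (iii) R_d(p) = R_d(q). -/
/-- The four quadrant directions. -/
inductive Dir : Type
  | nw | ne | sw | se
  deriving DecidableEq

noncomputable section

/-- A half-open square `[x, x+w) × [y, y+w)` given by its corner `(x, y)` and side `w`. -/
structure Sq where
  x : ℝ
  y : ℝ
  w : ℝ

/-- The set of points of a half-open square. -/
def Sq.set (R : Sq) : Set (ℝ × ℝ) :=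
  {p : ℝ × ℝ | R.x ≤ p.1 ∧ p.1 < R.x + R.w ∧ R.y ≤ p.2 ∧ p.2 < R.y + R.w}

/-- The quadrant of a square in a given direction: a half-open square of side `w/2`. -/
def Sq.quad (R : Sq) : Dir → Sq
  | .nw => ⟨R.x, R.y, R.w / 2⟩
  | .ne => ⟨R.x + R.w / 2, R.y, R.w / 2⟩
  | .sw => ⟨R.x, R.y + R.w / 2, R.w / 2⟩
  | .se => ⟨R.x + R.w / 2, R.y + R.w / 2, R.w / 2⟩

/-- The direction (routing quadrant) of a point `p` in the square `R`. -/
def Sq.dirOf (R : Sq) (p : ℝ × ℝ) : Dir :=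
  if p.1 < R.x + R.w / 2 then
    if p.2 < R.y + R.w / 2 then .nw else .sw
  else
    if p.2 < R.y + R.w / 2 then .ne else .se

/-- The square reached after `d` routing steps for the point `p`, starting from the root
square `R` (so `routeSq R p 0 = R`). -/
def routeSq (R : Sq) (p : ℝ × ℝ) : ℕ → Sq
  | 0 => R
  | n + 1 => (routeSq R p n).quad ((routeSq R p n).dirOf p)

/-- The `n`-th element of the routing sequence of `p`, i.e. the direction taken at step `n`. -/
def routeDir (R : Sq) (p : ℝ × ℝ) (n : ℕ) : Dir :=
  (routeSq R p n).dirOf p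

/-!
The quadrants of a square partition it, and `dirOf` names the quadrant containing a point:
`q` lies in `R.quad e` exactly when it lies in `R` and has direction `e` there. By induction,
`q ∈ R_d(p)` exactly when `q` lies in the root and its first `d` directions agree with those of
`p`; since `R_d` depends only on these directions, this also gives `R_d(p) = R_d(q)`.
-/

@[simp]
theorem routeSq_zero (R : Sq) (p : ℝ × ℝ) : routeSq R p 0 = R := rfl

theorem routeSq_succ (R : Sq) (p : ℝ × ℝ) (n : ℕ) :
    routeSq R p (n + 1) = (routeSq R p n).quad (routeDir R p n) := rfl

theorem Sq.mem_quad_dirOf {R : Sq} {p : ℝ × ℝ} (hp : p ∈ R.set) :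
    p ∈ (R.quad (R.dirOf p)).set := by
  obtain ⟨hx, hx', hy, hy'⟩ := hp
  unfold Sq.dirOf
  split_ifs <;> refine ⟨?_, ?_, ?_, ?_⟩ <;> simp only [Sq.quad] <;> linarith

theorem Sq.quad_set_subset (R : Sq) (e : Dir) : (R.quad e).set ⊆ R.set := by
  rintro p ⟨hx, hx', hy, hy'⟩
  cases e <;> simp only [Sq.quad] at hx hx' hy hy' <;>
    refine ⟨?_, ?_, ?_, ?_⟩ <;> linarith

theorem Sq.dirOf_eq_of_mem_quad {R : Sq} {e : Dir} {p : ℝ × ℝ} (hp : p ∈ (R.quad e).set) :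
    R.dirOf p = e := by
  obtain ⟨hx, hx', hy, hy'⟩ := hp
  cases e <;> simp only [Sq.quad] at hx hx' hy hy' <;> unfold Sq.dirOf <;>
    split_ifs <;> first | rfl | linarith

theorem Sq.mem_quad_iff {R : Sq} {e : Dir} {p : ℝ × ℝ} :
    p ∈ (R.quad e).set ↔ p ∈ R.set ∧ R.dirOf p = e where
  mp hp := ⟨R.quad_set_subset e hp, Sq.dirOf_eq_of_mem_quad hp⟩
  mpr := by
    rintro ⟨hp, rfl⟩
    exact Sq.mem_quad_dirOf hp

theorem routeSq_congr {R : Sq} {p q : ℝ × ℝ} {d : ℕ}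
    (h : ∀ i < d, routeDir R p i = routeDir R q i) : routeSq R p d = routeSq R q d := by
  induction d with
  | zero => rfl
  | succ n ih =>
    obtain ⟨agree, last⟩ := Nat.forall_lt_succ_right.mp h
    rw [routeSq_succ, routeSq_succ, ih agree, last]

theorem mem_routeSq_iff {R : Sq} {p q : ℝ × ℝ} {d : ℕ} :
    q ∈ (routeSq R p d).set ↔
      q ∈ R.set ∧ ∀ i < d, routeDir R p i = routeDir R q i := by
  induction d with
  | zero => simp
  | succ n ih =>
    rw [routeSq_succ, Sq.mem_quad_iff, ih, Nat.forall_lt_succ_right, and_assoc]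
    refine and_congr_right fun _ => and_congr_right fun agree => ?_
    rw [routeSq_congr agree]
    exact eq_comm

theorem mem_routeSq_self {R : Sq} {p : ℝ × ℝ} (hp : p ∈ R.set) (d : ℕ) :
    p ∈ (routeSq R p d).set :=
  mem_routeSq_iff.mpr ⟨hp, fun _ _ => rfl⟩

theorem routing_agree_iff_mem_iff_eq_general {R : Sq} (p : ℝ × ℝ) {q : ℝ × ℝ}
    (hq : q ∈ R.set) (d : ℕ) :
    ((∀ i < d, routeDir R p i = routeDir R q i) ↔ q ∈ (routeSq R p d).set) ∧
    (q ∈ (routeSq R p d).set ↔ routeSq R p d = routeSq R q d) := by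
  refine ⟨?agree_iff_mem, ?mem_to_eq, ?eq_to_mem⟩
  case agree_iff_mem => rw [mem_routeSq_iff, and_iff_right hq]
  case mem_to_eq => exact fun h => routeSq_congr (mem_routeSq_iff.mp h).2
  case eq_to_mem => exact fun h => h ▸ mem_routeSq_self hq d

/-- For points `p` and `q` in the root square and `d ∈ ℕ`, the following are
equivalent: (i) the routing sequences of `p` and `q` agree at every step `i < d`;
(ii) `q ∈ R_d(p)`; (iii) `R_d(p) = R_d(q)`. -/
theorem routing_agree_iff_mem_iff_eq (x₀ y₀ w : ℝ) (hw : 0 < w) (p q : ℝ × ℝ)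
    (hp : p ∈ (Sq.mk x₀ y₀ w).set) (hq : q ∈ (Sq.mk x₀ y₀ w).set) (d : ℕ) :
    ((∀ i < d, routeDir (Sq.mk x₀ y₀ w) p i = routeDir (Sq.mk x₀ y₀ w) q i) ↔
      q ∈ (routeSq (Sq.mk x₀ y₀ w) p d).set) ∧
    (q ∈ (routeSq (Sq.mk x₀ y₀ w) p d).set ↔
      routeSq (Sq.mk x₀ y₀ w) p d = routeSq (Sq.mk x₀ y₀ w) q d) :=
  routing_agree_iff_mem_iff_eq_general p hq d
end
end

section
/- For any two distinct points p, q in a half-open square R of side w > 0, the recursion defining split(p, q, R) terminates, so split(p, q, R) is a well-defined region quadtree; moreover split(p, q, R) is well-formed for R, keys(split(p, q, R)) = {p, q}, and Leaf p and Leaf q occur as two distinct children of one and the same Internal node of split(p, q, R). -/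
noncomputable section

/-- A region quadtree: `empty`, a `leaf` storing a key, or an `internal` node with four
children (nw, ne, sw, se). -/
inductive QTree : Type
  | empty : QTree
  | leaf (p : ℝ × ℝ) : QTree
  | internal (nw ne sw se : QTree) : QTree
  deriving DecidableEq

/-- The child of a tree in a given direction (for internal nodes). -/
def QTree.child : QTree → Dir → QTree
  | .internal a _ _ _, .nw => a
  | .internal _ b _ _, .ne => b
  | .internal _ _ c _, .sw => c
  | .internal _ _ _ e, .se => e
  | _, _ => .empty

/-- The set of keys appearing in the leaf nodes of a quadtree. -/
def QTree.keys : QTree → Set (ℝ × ℝ)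
  | .empty => ∅
  | .leaf p => {p}
  | .internal a b c e => a.keys ∪ b.keys ∪ c.keys ∪ e.keys

/-- `WF t R`: the tree `t` is well-formed for the half-open square `R`: an `empty` tree is
well-formed; a leaf is well-formed if its key lies in `R`; an internal node is well-formed if
each child is well-formed for the corresponding quadrant of `R`. -/
inductive WF : QTree → Sq → Prop
  | empty (R : Sq) : WF .empty R
  | leaf (p : ℝ × ℝ) (R : Sq) (hp : p ∈ R.set) : WF (.leaf p) R
  | internal (a b c e : QTree) (R : Sq)
      (ha : WF a (R.quad .nw)) (hb : WF b (R.quad .ne))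
      (hc : WF c (R.quad .sw)) (he : WF e (R.quad .se)) :
      WF (.internal a b c e) R

/-- The internal node whose child in direction `d` is `f d`. -/
def mkNode (f : Dir → QTree) : QTree :=
  .internal (f .nw) (f .ne) (f .sw) (f .se)

/-- Fuelled version of `split`: given fuel `n + 1`, if `p` and `q` lie in different quadrants
of `R`, return the internal node with `leaf p` and `leaf q` in their respective quadrants and
`empty` elsewhere; otherwise recurse (with fuel `n`) into the common quadrant containing `p`
and `q`, placing `empty` elsewhere. -/
def splitFuel : ℕ → ℝ × ℝ → ℝ × ℝ → Sq → QTree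
  | 0, _, _, _ => .empty
  | n + 1, p, q, R =>
    if R.dirOf p = R.dirOf q then
      mkNode fun d => if d = R.dirOf p then splitFuel n p q (R.quad (R.dirOf p)) else .empty
    else
      mkNode fun d =>
        if d = R.dirOf p then .leaf p else if d = R.dirOf q then .leaf q else .empty

open Classical in
/-- Enough fuel for the recursion defining `split p q R`: one more than the first depth
(along the routing path of `p`) at which `p` and `q` take different directions. -/
def splitDepth (p q : ℝ × ℝ) (R : Sq) : ℕ :=
  if h : ∃ n : ℕ, (routeSq R p n).dirOf p ≠ (routeSq R p n).dirOf q then Nat.find h + 1 else 0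

/-- `split p q R`, the region quadtree containing exactly the two distinct keys `p, q ∈ R`,
defined by the recursion described above (realized via the fuelled function with enough
fuel for the recursion to have terminated). -/
def split (p q : ℝ × ℝ) (R : Sq) : QTree :=
  splitFuel (splitDepth p q R) p q R

/-- Insertion of a key `p` into a quadtree well-formed for the region `R`. -/
def qinsert (p : ℝ × ℝ) : QTree → Sq → QTree
  | .empty, _ => .leaf p
  | .leaf q, R => if q = p then .leaf p else split p q R
  | .internal a b c e, R =>
    match R.dirOf p with
    | .nw => .internal (qinsert p a (R.quad .nw)) b c e
    | .ne => .internal a (qinsert p b (R.quad .ne)) c e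
    | .sw => .internal a b (qinsert p c (R.quad .sw)) e
    | .se => .internal a b c (qinsert p e (R.quad .se))

/-- The subtree of `t` at a direction sequence (defined only when the path exists). -/
def subtreeAt : QTree → List Dir → Option QTree
  | t, [] => some t
  | .internal a b c e, d :: s =>
    match d with
    | .nw => subtreeAt a s
    | .ne => subtreeAt b s
    | .sw => subtreeAt c s
    | .se => subtreeAt e s
  | .empty, _ :: _ => none
  | .leaf _, _ :: _ => none

/-!
Two points of a common half-open square are at sup-distance less than its side. Each step into a
common quadrant halves the side, so distinct points cannot share a quadrant forever: descending
into the common quadrant is an induction that ends at a square whose quadrants separate the two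
points. There `split` is a node holding both leaves; on the way back up each node has a single
nonempty child, which preserves well-formedness, the keys and the pair of sibling leaves.
-/

namespace Sq

theorem mem_quad_dirOf_s11 {R : Sq} {p : ℝ × ℝ} (hp : p ∈ R.set) : p ∈ (R.quad (R.dirOf p)).set := by
  obtain ⟨hx, hx', hy, hy'⟩ := hp
  unfold dirOf
  split_ifs <;> refine ⟨?_, ?_, ?_, ?_⟩ <;> simp only [quad] <;> linarith

theorem mem_quad_of_dirOf_eq {R : Sq} {p : ℝ × ℝ} {d : Dir} (hp : p ∈ R.set) (hd : R.dirOf p = d) :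
    p ∈ (R.quad d).set :=
  hd ▸ mem_quad_dirOf_s11 hp

theorem quad_w (R : Sq) (d : Dir) : (R.quad d).w = R.w / 2 := by
  cases d <;> rfl

theorem dist_lt_w {R : Sq} {p q : ℝ × ℝ} (hp : p ∈ R.set) (hq : q ∈ R.set) : dist p q < R.w := by
  obtain ⟨hpx, hpx', hpy, hpy'⟩ := hp
  obtain ⟨hqx, hqx', hqy, hqy'⟩ := hq
  rw [Prod.dist_eq, Real.dist_eq, Real.dist_eq, max_lt_iff, abs_sub_lt_iff, abs_sub_lt_iff]
  refine ⟨⟨?_, ?_⟩, ?_, ?_⟩ <;> linarith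

@[elab_as_elim]
theorem common_quad_induction {p q : ℝ × ℝ} (hpq : p ≠ q)
    {motive : (R : Sq) → p ∈ R.set → q ∈ R.set → Prop}
    (separated : ∀ R hp hq, R.dirOf p ≠ R.dirOf q → motive R hp hq)
    (common : ∀ R hp hq (hd : R.dirOf p = R.dirOf q),
      motive (R.quad (R.dirOf p)) (mem_quad_dirOf_s11 hp) (mem_quad_of_dirOf_eq hq hd.symm) →
        motive R hp hq)
    (R : Sq) (hp : p ∈ R.set) (hq : q ∈ R.set) : motive R hp hq := by
  obtain ⟨n, hn⟩ : ∃ n : ℕ, R.w / dist p q < 2 ^ n := pow_unbounded_of_one_lt _ one_lt_two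
  rw [div_lt_iff₀ (dist_pos.mpr hpq)] at hn
  induction n generalizing R with
  | zero => exact absurd (dist_lt_w hp hq) (by linarith)
  | succ n ih =>
    by_cases hd : R.dirOf p = R.dirOf q
    · refine common R hp hq hd (ih _ _ _ ?_)
      rw [pow_succ] at hn
      rw [quad_w]
      linarith
    · exact separated R hp hq hd

/-- Routing from `R` eventually sends `p` and `q` in different directions. This is the condition
under which `splitDepth p q R` is not the default value `0`. -/
abbrev Separates (R : Sq) (p q : ℝ × ℝ) : Prop :=
  ∃ n : ℕ, (routeSq R p n).dirOf p ≠ (routeSq R p n).dirOf q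

theorem routeSq_succ_eq_routeSq_quad (R : Sq) (p : ℝ × ℝ) (n : ℕ) :
    routeSq R p (n + 1) = routeSq (R.quad (R.dirOf p)) p n := by
  induction n with
  | zero => rfl
  | succ n ih => rw [routeSq, ih, routeSq]

theorem separates_of_dirOf_ne {R : Sq} {p q : ℝ × ℝ} (hd : R.dirOf p ≠ R.dirOf q) :
    R.Separates p q :=
  ⟨0, hd⟩

theorem separates_quad_iff {R : Sq} {p q : ℝ × ℝ} (hd : R.dirOf p = R.dirOf q) :
    (R.quad (R.dirOf p)).Separates p q ↔ R.Separates p q := by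
  simp only [Separates, ← routeSq_succ_eq_routeSq_quad]
  refine ⟨fun ⟨n, hn⟩ => ⟨n + 1, hn⟩, ?_⟩
  rintro ⟨_ | n, hn⟩
  · exact absurd hd hn
  · exact ⟨n, hn⟩

theorem separates_of_ne {R : Sq} {p q : ℝ × ℝ} (hp : p ∈ R.set) (hq : q ∈ R.set) (hpq : p ≠ q) :
    R.Separates p q := by
  induction R, hp, hq using common_quad_induction hpq with
  | separated _ _ _ hd => exact separates_of_dirOf_ne hd
  | common _ _ _ hd ih => exact (separates_quad_iff hd).mp ih

end Sq

section Recursion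

variable {p q : ℝ × ℝ} {R : Sq}

theorem splitFuel_succ_of_dirOf_ne (hd : R.dirOf p ≠ R.dirOf q) (n : ℕ) :
    splitFuel (n + 1) p q R = mkNode fun d =>
      if d = R.dirOf p then .leaf p else if d = R.dirOf q then .leaf q else .empty := by
  rw [splitFuel, if_neg hd]

theorem splitFuel_succ_of_dirOf_eq (hd : R.dirOf p = R.dirOf q) (n : ℕ) :
    splitFuel (n + 1) p q R = mkNode fun d =>
      if d = R.dirOf p then splitFuel n p q (R.quad (R.dirOf p)) else .empty := by
  rw [splitFuel, if_pos hd]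

open Classical in
theorem splitDepth_eq_find_add_one (h : R.Separates p q) : splitDepth p q R = Nat.find h + 1 :=
  dif_pos h

theorem splitDepth_of_dirOf_ne (hd : R.dirOf p ≠ R.dirOf q) : splitDepth p q R = 1 := by
  rw [splitDepth_eq_find_add_one (Sq.separates_of_dirOf_ne hd), (Nat.find_eq_zero _).mpr hd]

theorem splitDepth_of_dirOf_eq (h : R.Separates p q) (hd : R.dirOf p = R.dirOf q) :
    splitDepth p q R = splitDepth p q (R.quad (R.dirOf p)) + 1 := by
  have hquad := (Sq.separates_quad_iff hd).mpr h
  rw [splitDepth_eq_find_add_one h, splitDepth_eq_find_add_one hquad]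
  simp only [Sq.Separates, ← Sq.routeSq_succ_eq_routeSq_quad] at hquad ⊢
  rw [Nat.find_comp_succ h hquad (not_not.mpr hd)]

theorem split_of_dirOf_ne (hd : R.dirOf p ≠ R.dirOf q) :
    split p q R = mkNode fun d =>
      if d = R.dirOf p then .leaf p else if d = R.dirOf q then .leaf q else .empty := by
  rw [split, splitDepth_of_dirOf_ne hd, splitFuel_succ_of_dirOf_ne hd]

theorem split_of_dirOf_eq (h : R.Separates p q) (hd : R.dirOf p = R.dirOf q) :
    split p q R = mkNode fun d =>
      if d = R.dirOf p then split p q (R.quad (R.dirOf p)) else .empty := by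
  rw [split, splitDepth_of_dirOf_eq h hd, splitFuel_succ_of_dirOf_eq hd, split]

theorem splitFuel_eq_split (h : R.Separates p q) {n : ℕ} (hn : splitDepth p q R ≤ n) :
    splitFuel n p q R = split p q R := by
  induction n generalizing R with
  | zero => rw [split, Nat.le_zero.mp hn]
  | succ n ih =>
    by_cases hd : R.dirOf p = R.dirOf q
    · rw [splitDepth_of_dirOf_eq h hd, Nat.add_le_add_iff_right] at hn
      rw [splitFuel_succ_of_dirOf_eq hd, split_of_dirOf_eq h hd,
        ih ((Sq.separates_quad_iff hd).mpr h) hn]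
    · rw [splitFuel_succ_of_dirOf_ne hd, split_of_dirOf_ne hd]

end Recursion

section Node

variable {f : Dir → QTree} {p q : ℝ × ℝ}

theorem WF.mkNode {R : Sq} (h : ∀ d, WF (f d) (R.quad d)) : WF (mkNode f) R :=
  .internal _ _ _ _ _ (h .nw) (h .ne) (h .sw) (h .se)

namespace QTree

theorem child_mkNode (f : Dir → QTree) (d : Dir) : (mkNode f).child d = f d := by
  cases d <;> rfl

theorem subtreeAt_mkNode_cons (f : Dir → QTree) (d : Dir) (s : List Dir) :
    subtreeAt (mkNode f) (d :: s) = subtreeAt (f d) s := by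
  cases d <;> rfl

theorem mem_keys_mkNode {x : ℝ × ℝ} : x ∈ (mkNode f).keys ↔ ∃ d, x ∈ (f d).keys := by
  simp only [mkNode, keys, Set.mem_union]
  constructor
  · rintro (((h | h) | h) | h) <;> exact ⟨_, h⟩
  · rintro ⟨_ | _ | _ | _, h⟩ <;> simp only [h, true_or, or_true]

theorem keys_mkNode_single (d : Dir) (t : QTree) :
    (mkNode fun e => if e = d then t else .empty).keys = t.keys := by
  ext x
  rw [mem_keys_mkNode]
  refine ⟨fun ⟨e, he⟩ => ?_, fun hx => ⟨d, by rwa [if_pos rfl]⟩⟩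
  split_ifs at he
  · exact he
  · exact he.elim

theorem keys_mkNode_pair {d₁ d₂ : Dir} (hd : d₁ ≠ d₂) (t₁ t₂ : QTree) :
    (mkNode fun e => if e = d₁ then t₁ else if e = d₂ then t₂ else .empty).keys =
      t₁.keys ∪ t₂.keys := by
  ext x
  rw [mem_keys_mkNode, Set.mem_union]
  constructor
  · rintro ⟨e, he⟩
    split_ifs at he
    · exact .inl he
    · exact .inr he
    · exact he.elim
  · rintro (hx | hx)
    · exact ⟨d₁, by rwa [if_pos rfl]⟩
    · exact ⟨d₂, by rwa [if_neg hd.symm, if_pos rfl]⟩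

/-- `leaf p` and `leaf q` are two distinct children of one internal node of `t`; the node
`u` is located by its path `s` from the root. -/
def HasSiblingLeaves (t : QTree) (p q : ℝ × ℝ) : Prop :=
  ∃ (s : List Dir) (u : QTree), subtreeAt t s = some u ∧
    (∃ a b c e : QTree, u = .internal a b c e) ∧
    ∃ d₁ d₂ : Dir, d₁ ≠ d₂ ∧ u.child d₁ = .leaf p ∧ u.child d₂ = .leaf q

theorem hasSiblingLeaves_mkNode {d₁ d₂ : Dir} (hd : d₁ ≠ d₂) (hp : f d₁ = .leaf p)
    (hq : f d₂ = .leaf q) : (mkNode f).HasSiblingLeaves p q :=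
  ⟨[], mkNode f, by rw [subtreeAt], ⟨_, _, _, _, rfl⟩, d₁, d₂, hd,
    (child_mkNode f d₁).trans hp, (child_mkNode f d₂).trans hq⟩

theorem HasSiblingLeaves.mkNode {d : Dir} (h : (f d).HasSiblingLeaves p q) :
    (mkNode f).HasSiblingLeaves p q := by
  obtain ⟨s, u, hu, hchild⟩ := h
  exact ⟨d :: s, u, (subtreeAt_mkNode_cons f d s).trans hu, hchild⟩

end QTree

end Node

section Split

variable {p q : ℝ × ℝ} {R : Sq}

theorem wf_split (hp : p ∈ R.set) (hq : q ∈ R.set) (hpq : p ≠ q) : WF (split p q R) R := by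
  induction R, hp, hq using Sq.common_quad_induction hpq with
  | separated R hp hq hd =>
    rw [split_of_dirOf_ne hd]
    refine WF.mkNode fun d => ?_
    split_ifs with hdp hdq
    · exact .leaf _ _ (Sq.mem_quad_of_dirOf_eq hp hdp.symm)
    · exact .leaf _ _ (Sq.mem_quad_of_dirOf_eq hq hdq.symm)
    · exact .empty _
  | common R hp hq hd ih =>
    rw [split_of_dirOf_eq (Sq.separates_of_ne hp hq hpq) hd]
    refine WF.mkNode fun d => ?_
    split_ifs with hdp
    · exact hdp ▸ ih
    · exact .empty _

theorem keys_split (hp : p ∈ R.set) (hq : q ∈ R.set) (hpq : p ≠ q) :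
    (split p q R).keys = {p, q} := by
  induction R, hp, hq using Sq.common_quad_induction hpq with
  | separated R hp hq hd =>
    rw [split_of_dirOf_ne hd, QTree.keys_mkNode_pair hd, QTree.keys, QTree.keys,
      Set.singleton_union]
  | common R hp hq hd ih =>
    rw [split_of_dirOf_eq (Sq.separates_of_ne hp hq hpq) hd, QTree.keys_mkNode_single, ih]

theorem hasSiblingLeaves_split (hp : p ∈ R.set) (hq : q ∈ R.set) (hpq : p ≠ q) :
    (split p q R).HasSiblingLeaves p q := by
  induction R, hp, hq using Sq.common_quad_induction hpq with
  | separated R hp hq hd =>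
    rw [split_of_dirOf_ne hd]
    exact QTree.hasSiblingLeaves_mkNode hd (if_pos rfl) ((if_neg hd.symm).trans (if_pos rfl))
  | common R hp hq hd ih =>
    rw [split_of_dirOf_eq (Sq.separates_of_ne hp hq hpq) hd]
    refine QTree.HasSiblingLeaves.mkNode (d := R.dirOf p) ?_
    rwa [if_pos rfl]

end Split

/-- For any two distinct points `p, q` in a half-open square `R` of side `w > 0`,
the recursion defining `split(p, q, R)` terminates (the fuelled computation stabilizes, so
`split(p, q, R)` is a well-defined region quadtree); moreover `split(p, q, R)` is well-formed
for `R`, `keys(split(p, q, R)) = {p, q}`, and `leaf p` and `leaf q` occur as two distinct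
children of one and the same internal node of `split(p, q, R)`. -/
theorem split_terminates_wf_keys (R : Sq) (hw : 0 < R.w) (p q : ℝ × ℝ)
    (hp : p ∈ R.set) (hq : q ∈ R.set) (hpq : p ≠ q) :
    (∃ n₀ : ℕ, ∀ n, n₀ ≤ n → splitFuel n p q R = split p q R) ∧
    WF (split p q R) R ∧
    (split p q R).keys = {p, q} ∧
    (∃ (s : List Dir) (u : QTree), subtreeAt (split p q R) s = some u ∧
      (∃ a b c e : QTree, u = .internal a b c e) ∧
      ∃ d₁ d₂ : Dir, d₁ ≠ d₂ ∧ u.child d₁ = .leaf p ∧ u.child d₂ = .leaf q) := by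
  have hsep : R.Separates p q := Sq.separates_of_ne hp hq hpq
  exact ⟨⟨splitDepth p q R, fun _ hn => splitFuel_eq_split hsep hn⟩, wf_split hp hq hpq,
    keys_split hp hq hpq, hasSiblingLeaves_split hp hq hpq⟩
end
end

section
/- For every region quadtree t well-formed for a half-open square R of side w > 0 and every point p ∈ R, contain(p, t, R) returns true if and only if p ∈ keys(t). -/
noncomputable section

open Classical in
/-- The membership query: `contain(p, empty, R) = false`; `contain(p, leaf q, R) = (q = p)`;
on an internal node it recurses into the child in the direction of `p` in `R`, with the
corresponding quadrant as region. -/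
def contain (p : ℝ × ℝ) : QTree → Sq → Bool
  | .empty, _ => false
  | .leaf q, _ => decide (q = p)
  | .internal a b c e, R =>
    match R.dirOf p with
    | .nw => contain p a (R.quad .nw)
    | .ne => contain p b (R.quad .ne)
    | .sw => contain p c (R.quad .sw)
    | .se => contain p e (R.quad .se)

/-! The quadrants of a square are disjoint, since each point of a quadrant has that quadrant's
direction. As the keys of a well-formed tree lie in its square, a key `p` below an internal node can
only occur in the child in the direction of `p`, the one child that the query visits. -/

namespace Sq

theorem dirOf_eq_of_mem_quad_s14 {R : Sq} {p : ℝ × ℝ} {d : Dir} (hp : p ∈ (R.quad d).set) :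
    R.dirOf p = d := by
  obtain ⟨hx_le, hx_lt, hy_le, hy_lt⟩ := hp
  cases d with
  | nw => exact (if_pos hx_lt).trans (if_pos hy_lt)
  | ne => exact (if_neg hx_le.not_gt).trans (if_pos hy_lt)
  | sw => exact (if_pos hx_lt).trans (if_neg hy_le.not_gt)
  | se => exact (if_neg hx_le.not_gt).trans (if_neg hy_le.not_gt)

theorem quad_set_subset_s14 (R : Sq) (d : Dir) : (R.quad d).set ⊆ R.set := by
  rintro p ⟨hx_le, hx_lt, hy_le, hy_lt⟩
  have hw : 0 < (R.quad d).w := by linarith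
  cases d <;> simp only [quad] at hw hx_le hx_lt hy_le hy_lt <;>
    refine ⟨?_, ?_, ?_, ?_⟩ <;> linarith

end Sq

theorem QTree.keys_internal_eq_iUnion_child (a b c e : QTree) :
    (internal a b c e).keys = ⋃ d, ((internal a b c e).child d).keys := by
  apply Set.Subset.antisymm
  · rintro p (((ha | hb) | hc) | he)
    exacts [Set.mem_iUnion.2 ⟨.nw, ha⟩, Set.mem_iUnion.2 ⟨.ne, hb⟩,
      Set.mem_iUnion.2 ⟨.sw, hc⟩, Set.mem_iUnion.2 ⟨.se, he⟩]
  · refine Set.iUnion_subset fun d p hp => ?_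
    cases d with
    | nw => exact .inl (.inl (.inl hp))
    | ne => exact .inl (.inl (.inr hp))
    | sw => exact .inl (.inr hp)
    | se => exact .inr hp

theorem contain_internal (p : ℝ × ℝ) (a b c e : QTree) (R : Sq) :
    contain p (.internal a b c e) R =
      contain p ((QTree.internal a b c e).child (R.dirOf p)) (R.quad (R.dirOf p)) := by
  rw [contain]
  cases R.dirOf p <;> rfl

namespace WF

theorem child {t : QTree} {R : Sq} (ht : WF t R) (d : Dir) : WF (t.child d) (R.quad d) := by
  cases ht with
  | empty => exact .empty _
  | leaf => exact .empty _
  | internal a b c e _ ha hb hc he =>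
    cases d
    exacts [ha, hb, hc, he]

theorem keys_subset_set {t : QTree} {R : Sq} (ht : WF t R) : t.keys ⊆ R.set := by
  induction ht with
  | empty => exact Set.empty_subset _
  | leaf p R hp => exact Set.singleton_subset_iff.2 hp
  | internal a b c e R _ _ _ _ iha ihb ihc ihe =>
    rw [QTree.keys_internal_eq_iUnion_child]
    refine Set.iUnion_subset fun d => Set.Subset.trans ?_ (R.quad_set_subset_s14 d)
    cases d
    exacts [iha, ihb, ihc, ihe]

theorem mem_keys_internal_iff {a b c e : QTree} {R : Sq} (ht : WF (.internal a b c e) R)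
    (p : ℝ × ℝ) :
    p ∈ (QTree.internal a b c e).keys ↔
      p ∈ ((QTree.internal a b c e).child (R.dirOf p)).keys := by
  rw [QTree.keys_internal_eq_iUnion_child, Set.mem_iUnion]
  refine ⟨fun ⟨d, hd⟩ => ?_, fun h => ⟨_, h⟩⟩
  rwa [Sq.dirOf_eq_of_mem_quad_s14 ((ht.child d).keys_subset_set hd)]

end WF

theorem contain_iff_mem_keys_general {t : QTree} {R : Sq} (ht : WF t R) (p : ℝ × ℝ) :
    contain p t R = true ↔ p ∈ t.keys := by
  induction ht with
  | empty => simp [contain, QTree.keys]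
  | leaf q => simp [contain, QTree.keys, eq_comm]
  | internal a b c e R ha hb hc he iha ihb ihc ihe =>
    rw [contain_internal, (WF.internal a b c e R ha hb hc he).mem_keys_internal_iff]
    cases R.dirOf p
    exacts [iha, ihb, ihc, ihe]

/-- For every region quadtree `t` well-formed for a half-open square `R` of side
`w > 0` and every point `p ∈ R`, `contain(p, t, R)` returns `true` iff `p ∈ keys(t)`. -/
theorem contain_iff_mem_keys (R : Sq) (hw : 0 < R.w) (t : QTree) (ht : WF t R)
    (p : ℝ × ℝ) (hp : p ∈ R.set) :
    contain p t R = true ↔ p ∈ t.keys :=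
  contain_iff_mem_keys_general ht p
end
end

section
/- Compression is correct: let t be a region quadtree well-formed for a half-open square R of side w > 0, and suppose the subtree of t at some direction sequence s is an Internal node all four of whose children are Empty. Then the tree obtained from t by replacing the subtree at s with Empty is well-formed for R and has the same key set as t. -/
noncomputable section

/-- Replacing the subtree of `t` at position `s` by the tree `u`, leaving all other nodes
unchanged (if the path `s` does not exist in `t`, the tree is returned unchanged). -/
def replaceAt : QTree → List Dir → QTree → QTree
  | _, [], u => u
  | .internal a b c e, d :: s, u =>
    match d with
    | .nw => .internal (replaceAt a s u) b c e
    | .ne => .internal a (replaceAt b s u) c e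
    | .sw => .internal a b (replaceAt c s u) e
    | .se => .internal a b c (replaceAt e s u)
  | .empty, _ :: _, _ => .empty
  | .leaf q, _ :: _, _ => .leaf q

/-- The cell of `R` addressed by a direction sequence `s`: the square reached from `R` by passing
to the quadrants listed in `s`, outermost first. It is the region of the node at position `s` in a
quadtree for `R`. -/
def Sq.cell (R : Sq) (s : List Dir) : Sq :=
  s.foldl Sq.quad R

theorem WF.replaceAt {t u : QTree} {R : Sq} {s : List Dir} (ht : WF t R)
    (hu : WF u (R.cell s)) : WF (replaceAt t s u) R := by
  induction ht generalizing s with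
  | empty R =>
    cases s with
    | nil => exact hu
    | cons => exact .empty R
  | leaf p R hp =>
    cases s with
    | nil => exact hu
    | cons => exact .leaf p R hp
  | internal a b c e R ha hb hc he iha ihb ihc ihe =>
    match s with
    | [] => exact hu
    | .nw :: s => exact .internal _ _ _ _ R (iha hu) hb hc he
    | .ne :: s => exact .internal _ _ _ _ R ha (ihb hu) hc he
    | .sw :: s => exact .internal _ _ _ _ R ha hb (ihc hu) he
    | .se :: s => exact .internal _ _ _ _ R ha hb hc (ihe hu)

theorem QTree.keys_replaceAt_of_keys_eq {t u v : QTree} {s : List Dir}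
    (hv : subtreeAt t s = some v) (huv : u.keys = v.keys) :
    (replaceAt t s u).keys = t.keys := by
  induction t generalizing s with
  | empty | leaf =>
    cases s with
    | nil =>
      cases hv
      exact huv
    | cons => cases hv
  | internal a b c e iha ihb ihc ihe =>
    match s with
    | [] =>
      cases hv
      exact huv
    | .nw :: s => simp only [replaceAt, keys, iha hv]
    | .ne :: s => simp only [replaceAt, keys, ihb hv]
    | .sw :: s => simp only [replaceAt, keys, ihc hv]
    | .se :: s => simp only [replaceAt, keys, ihe hv]

/-- Compression is correct: let `t` be a region quadtree well-formed for a
half-open square `R` of side `w > 0`, and suppose the subtree of `t` at some direction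
sequence `s` is an internal node all four of whose children are `empty`.  Then the tree
obtained from `t` by replacing the subtree at `s` with `empty` is well-formed for `R` and
has the same key set as `t`. -/
theorem compress_correct (R : Sq) (hw : 0 < R.w) (t : QTree) (ht : WF t R)
    (s : List Dir)
    (hsub : subtreeAt t s = some (.internal .empty .empty .empty .empty)) :
    WF (replaceAt t s .empty) R ∧ (replaceAt t s .empty).keys = t.keys := by
  have keys_eq : QTree.empty.keys = (QTree.internal .empty .empty .empty .empty).keys := by
    simp only [QTree.keys, Set.union_empty]
  exact ⟨ht.replaceAt (.empty _), QTree.keys_replaceAt_of_keys_eq hsub keys_eq⟩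
end
end
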